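/- Let 0 < λ₁ < λ₂ < λ₃, set m = (λ₂² − λ₁²)/(λ₃² − λ₁²), h² = (λ₁² + λ₂² + λ₃²)/2, and μ(m) = E(m)/K(m). Then the normalization constant r² of the genus-1 condensate spectral flux density satisfies r² = (∫_{λ₁}^{λ₂} (y⁵ − h²y³)/√((y² − λ₁²)(λ₂² − y²)(λ₃² − y²)) dy) / (∫_{λ₁}^{λ₂} y/√((y² − λ₁²)(λ₂² − y²)(λ₃² − y²)) dy) = (1/6)·[λ₃²(λ₃² − λ₂² − λ₁²) − 2λ₁²λ₂² − (λ₁² + λ₂² + λ₃²)(λ₃² − λ₁²)·μ(m)]. -/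

import Mathlib

/-- The complete elliptic integral of the first kind, `K(m) = ∫₀^{π/2} dθ/√(1 - m sin²θ)`. -/
noncomputable def ellipticK (m : ℝ) : ℝ :=
  ∫ θ in (0:ℝ)..(Real.pi / 2), 1 / Real.sqrt (1 - m * Real.sin θ ^ 2)

/-- The complete elliptic integral of the second kind, `E(m) = ∫₀^{π/2} √(1 - m sin²θ) dθ`. -/
noncomputable def ellipticE (m : ℝ) : ℝ :=
  ∫ θ in (0:ℝ)..(Real.pi / 2), Real.sqrt (1 - m * Real.sin θ ^ 2)

/-!
In the variable `x = y²` the integrals over the s-gap become moments of `1 / √P` on `[a, b]`, where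
`P(x) = (x - a)(b - x)(c - x)` with `a = λ₁²`, `b = λ₂²`, `c = λ₃²`. Since `√P` vanishes at both
ends, `∫ P' / √P = 0`, which expresses the second moment through the first and the zeroth. The
substitution `x = a + (b - a) sin² θ = c - (c - a)(1 - m sin² θ)` turns those two into combinations
of `E(m)` and `K(m)`.
-/

section

open Real Set intervalIntegral MeasureTheory

lemma integral_comp_sq_mul_id {l u : ℝ} (hl : 0 ≤ l) (hu : 0 ≤ u) (g : ℝ → ℝ) :
    ∫ y in l..u, g (y ^ 2) * y = 1 / 2 * ∫ x in (l ^ 2)..(u ^ 2), g x := by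
  have hsubst := integral_comp_mul_deriv_of_deriv_nonneg (a := l) (b := u) (g := g)
    (continuous_pow 2).continuousOn (fun y _ ↦ hasDerivAt_pow 2 y)
    (fun y hy ↦ by have := (le_min hl hu).trans hy.1.le; positivity)
  rw [← hsubst, ← intervalIntegral.integral_const_mul]
  refine integral_congr fun y _ ↦ ?_
  simp only [Function.comp_apply]
  push_cast
  ring

lemma sin_mul_cos_pos_of_mem_Ioo {θ : ℝ} (hθ : θ ∈ Ioo 0 (π / 2)) : 0 < sin θ * cos θ :=
  mul_pos (sin_pos_of_pos_of_lt_pi hθ.1 (by linarith [hθ.2, pi_pos]))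
    (cos_pos_of_mem_Ioo ⟨by linarith [hθ.1, pi_pos], hθ.2⟩)

lemma one_sub_mul_sin_sq_pos {m : ℝ} (hm : m < 1) (θ : ℝ) : 0 < 1 - m * sin θ ^ 2 := by
  rcases le_total m 0 with hm0 | hm0
  · linarith [mul_nonpos_of_nonpos_of_nonneg hm0 (sq_nonneg (sin θ))]
  · linarith [mul_le_of_le_one_right hm0 (sin_sq_le_one θ)]

lemma continuous_one_div_sqrt_one_sub_mul_sin_sq {m : ℝ} (hm : m < 1) :
    Continuous fun θ ↦ 1 / √(1 - m * sin θ ^ 2) :=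
  continuous_const.div (by fun_prop) fun θ ↦ (sqrt_pos.2 (one_sub_mul_sin_sq_pos hm θ)).ne'

lemma ellipticK_pos {m : ℝ} (hm : m < 1) : 0 < ellipticK m :=
  intervalIntegral_pos_of_pos
    ((continuous_one_div_sqrt_one_sub_mul_sin_sq hm).intervalIntegrable _ _)
    (fun θ ↦ one_div_pos.2 (sqrt_pos.2 (one_sub_mul_sin_sq_pos hm θ))) (by positivity)

/-- The cubic `P` under the square root of the s-gap integrals in the variable `x = y²`, so that
`R̃(y)² = P(y²)` when `a`, `b`, `c` are the squares of the spectral edges. -/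
def gapCubic (a b c x : ℝ) : ℝ := (x - a) * (b - x) * (c - x)

/-- Legendre's parametrization of the interval `[a, b]` by `θ ∈ [0, π / 2]`, which brings
integrals against `1 / √P` to trigonometric form. -/
noncomputable def sinSqParam (a b θ : ℝ) : ℝ := a + (b - a) * sin θ ^ 2

variable {a b c : ℝ}

lemma sub_div_sub_lt_one (hac : a < c) (hbc : b < c) : (b - a) / (c - a) < 1 :=
  (div_lt_one (sub_pos.2 hac)).2 (by linarith)

lemma continuous_gapCubic (a b c : ℝ) : Continuous (gapCubic a b c) := by
  unfold gapCubic
  fun_prop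

lemma gapCubic_pos (hbc : b ≤ c) {x : ℝ} (hx : x ∈ Ioo a b) : 0 < gapCubic a b c x :=
  mul_pos (mul_pos (sub_pos.2 hx.1) (sub_pos.2 hx.2)) (sub_pos.2 (hx.2.trans_le hbc))

lemma hasDerivAt_gapCubic (a b c x : ℝ) :
    HasDerivAt (gapCubic a b c)
      (3 * x ^ 2 - 2 * (a + b + c) * x + (a * b + a * c + b * c)) x := by
  have hderiv := (((hasDerivAt_id x).sub_const a).mul ((hasDerivAt_id x).const_sub b)).mul
    ((hasDerivAt_id x).const_sub c)
  refine hderiv.congr_deriv ?_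
  simp only [Pi.mul_apply, id]
  ring

lemma hasDerivAt_sinSqParam (a b θ : ℝ) :
    HasDerivAt (sinSqParam a b) (2 * ((b - a) * (sin θ * cos θ))) θ :=
  ((((hasDerivAt_sin θ).pow 2).const_mul (b - a)).const_add a).congr_deriv (by push_cast; ring)

lemma continuous_sinSqParam (a b : ℝ) : Continuous (sinSqParam a b) :=
  continuous_iff_continuousAt.2 fun θ ↦ (hasDerivAt_sinSqParam a b θ).continuousAt

lemma sinSqParam_zero (a b : ℝ) : sinSqParam a b 0 = a := by
  simp [sinSqParam]

lemma sinSqParam_pi_div_two (a b : ℝ) : sinSqParam a b (π / 2) = b := by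
  simp [sinSqParam]

lemma deriv_sinSqParam_nonneg (hab : a ≤ b) {θ : ℝ} (hθ : θ ∈ uIoo 0 (π / 2)) :
    0 ≤ 2 * ((b - a) * (sin θ * cos θ)) := by
  rw [uIoo_of_le pi_div_two_pos.le] at hθ
  have := sin_mul_cos_pos_of_mem_Ioo hθ
  have := sub_nonneg.2 hab
  positivity

lemma sinSqParam_eq_sub (hac : a ≠ c) (θ : ℝ) :
    sinSqParam a b θ = c - (c - a) * (1 - (b - a) / (c - a) * sin θ ^ 2) := by
  have hca : c - a ≠ 0 := sub_ne_zero.2 hac.symm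
  simp only [sinSqParam]
  field_simp
  ring

lemma gapCubic_sinSqParam (hac : a ≠ c) (θ : ℝ) :
    gapCubic a b c (sinSqParam a b θ) =
      ((b - a) * (sin θ * cos θ)) ^ 2 *
        ((c - a) * (1 - (b - a) / (c - a) * sin θ ^ 2)) := by
  have hthird : c - sinSqParam a b θ = (c - a) * (1 - (b - a) / (c - a) * sin θ ^ 2) := by
    rw [sinSqParam_eq_sub hac, sub_sub_cancel]
  rw [gapCubic, hthird, mul_pow, mul_pow, cos_sq', sinSqParam]
  ring

lemma sqrt_gapCubic_sinSqParam (hab : a ≤ b) (hac : a < c) {θ : ℝ} (hθ : θ ∈ Ioo 0 (π / 2)) :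
    √(gapCubic a b c (sinSqParam a b θ)) =
      (b - a) * (sin θ * cos θ) *
        (√(c - a) * √(1 - (b - a) / (c - a) * sin θ ^ 2)) := by
  have hnonneg : 0 ≤ (b - a) * (sin θ * cos θ) :=
    mul_nonneg (sub_nonneg.2 hab) (sin_mul_cos_pos_of_mem_Ioo hθ).le
  rw [gapCubic_sinSqParam hac.ne, sqrt_mul (sq_nonneg _), sqrt_sq hnonneg,
    sqrt_mul (sub_pos.2 hac).le]

lemma div_sqrt_gapCubic_sinSqParam_mul_deriv (hab : a < b) (hac : a < c) (f : ℝ → ℝ) {θ : ℝ}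
    (hθ : θ ∈ Ioo 0 (π / 2)) :
    f (sinSqParam a b θ) / √(gapCubic a b c (sinSqParam a b θ)) *
        (2 * ((b - a) * (sin θ * cos θ))) =
      2 / √(c - a) * (f (sinSqParam a b θ) / √(1 - (b - a) / (c - a) * sin θ ^ 2)) := by
  have hjac : (b - a) * (sin θ * cos θ) ≠ 0 :=
    (mul_pos (sub_pos.2 hab) (sin_mul_cos_pos_of_mem_Ioo hθ)).ne'
  rw [sqrt_gapCubic_sinSqParam hab.le hac hθ]
  generalize (b - a) * (sin θ * cos θ) = jac at hjac ⊢
  field_simp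

lemma integral_div_sqrt_gapCubic (hab : a < b) (hac : a < c) (f : ℝ → ℝ) :
    ∫ x in a..b, f x / √(gapCubic a b c x) =
      2 / √(c - a) * ∫ θ in (0 : ℝ)..(π / 2),
        f (sinSqParam a b θ) / √(1 - (b - a) / (c - a) * sin θ ^ 2) := by
  have hsubst := integral_comp_mul_deriv_of_deriv_nonneg
    (g := fun x ↦ f x / √(gapCubic a b c x)) (continuous_sinSqParam a b).continuousOn
    (fun θ _ ↦ hasDerivAt_sinSqParam a b θ) (fun θ hθ ↦ deriv_sinSqParam_nonneg hab.le hθ)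
  rw [sinSqParam_zero, sinSqParam_pi_div_two] at hsubst
  rw [← hsubst, ← intervalIntegral.integral_const_mul]
  exact integral_congr_Ioo_of_le pi_div_two_pos.le fun θ hθ ↦
    div_sqrt_gapCubic_sinSqParam_mul_deriv hab hac f hθ

lemma intervalIntegrable_div_sqrt_gapCubic (hab : a < b) (hbc : b < c) {f : ℝ → ℝ}
    (hf : Continuous f) :
    IntervalIntegrable (fun x ↦ f x / √(gapCubic a b c x)) volume a b := by
  have hac : a < c := hab.trans hbc
  have hsubst := integrable_comp_mul_deriv_iff_of_deriv_nonneg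
    (g := fun x ↦ f x / √(gapCubic a b c x)) (continuous_sinSqParam a b).continuousOn
    (fun θ _ ↦ hasDerivAt_sinSqParam a b θ) (fun θ hθ ↦ deriv_sinSqParam_nonneg hab.le hθ)
  rw [sinSqParam_zero, sinSqParam_pi_div_two] at hsubst
  have hcont : Continuous fun θ ↦
      2 / √(c - a) * (f (sinSqParam a b θ) / √(1 - (b - a) / (c - a) * sin θ ^ 2)) :=
    continuous_const.mul <| (hf.comp (continuous_sinSqParam a b)).div (by fun_prop) fun θ ↦
      (sqrt_pos.2 (one_sub_mul_sin_sq_pos (sub_div_sub_lt_one hac hbc) θ)).ne'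
  refine hsubst.1 ((hcont.intervalIntegrable _ _).congr_uIoo fun θ hθ ↦ ?_)
  rw [uIoo_of_le pi_div_two_pos.le] at hθ
  exact (div_sqrt_gapCubic_sinSqParam_mul_deriv hab hac f hθ).symm

lemma integral_one_div_sqrt_gapCubic (hab : a < b) (hac : a < c) :
    ∫ x in a..b, 1 / √(gapCubic a b c x) =
      2 / √(c - a) * ellipticK ((b - a) / (c - a)) :=
  integral_div_sqrt_gapCubic hab hac fun _ ↦ 1

lemma integral_id_div_sqrt_gapCubic (hab : a < b) (hbc : b < c) :
    ∫ x in a..b, x / √(gapCubic a b c x) =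
      2 / √(c - a) * (c * ellipticK ((b - a) / (c - a)) -
        (c - a) * ellipticE ((b - a) / (c - a))) := by
  have hac : a < c := hab.trans hbc
  have hm : (b - a) / (c - a) < 1 := sub_div_sub_lt_one hac hbc
  have hsplit (θ : ℝ) : sinSqParam a b θ / √(1 - (b - a) / (c - a) * sin θ ^ 2) =
      c * (1 / √(1 - (b - a) / (c - a) * sin θ ^ 2)) -
        (c - a) * √(1 - (b - a) / (c - a) * sin θ ^ 2) := by
    rw [sinSqParam_eq_sub hac.ne, sub_div, mul_div_assoc, div_sqrt, mul_one_div]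
  rw [integral_div_sqrt_gapCubic hab hac fun x ↦ x]
  simp only [hsplit]
  rw [intervalIntegral.integral_sub, intervalIntegral.integral_const_mul,
    intervalIntegral.integral_const_mul, ellipticK, ellipticE]
  · exact ((continuous_one_div_sqrt_one_sub_mul_sin_sq hm).const_mul c).intervalIntegrable _ _
  · exact Continuous.intervalIntegrable (by fun_prop) _ _

lemma integral_deriv_gapCubic_div_sqrt_eq_zero (hab : a < b) (hbc : b < c) :
    ∫ x in a..b, (3 * x ^ 2 - 2 * (a + b + c) * x + (a * b + a * c + b * c)) /
      √(gapCubic a b c x) = 0 := by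
  have hderiv : ∀ x ∈ Ioo a b, HasDerivAt (fun x ↦ 2 * √(gapCubic a b c x))
      ((3 * x ^ 2 - 2 * (a + b + c) * x + (a * b + a * c + b * c)) / √(gapCubic a b c x)) x := by
    intro x hx
    refine (((hasDerivAt_gapCubic a b c x).sqrt (gapCubic_pos hbc.le hx).ne').const_mul
      2).congr_deriv ?_
    rw [← mul_div_assoc, mul_div_mul_left _ _ two_ne_zero]
  rw [integral_eq_sub_of_hasDerivAt_of_le hab.le
    ((continuous_gapCubic a b c).sqrt.const_mul 2).continuousOn hderiv
    (intervalIntegrable_div_sqrt_gapCubic hab hbc (by fun_prop))]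
  simp [gapCubic]

lemma integral_quadratic_div_sqrt_gapCubic (hab : a < b) (hbc : b < c) (p q r : ℝ) :
    ∫ x in a..b, (p * x ^ 2 + q * x + r) / √(gapCubic a b c x) =
      p * (∫ x in a..b, x ^ 2 / √(gapCubic a b c x)) +
        q * (∫ x in a..b, x / √(gapCubic a b c x)) +
        r * ∫ x in a..b, 1 / √(gapCubic a b c x) := by
  have hsplit (x : ℝ) : (p * x ^ 2 + q * x + r) / √(gapCubic a b c x) =
      p * (x ^ 2 / √(gapCubic a b c x)) + q * (x / √(gapCubic a b c x)) +
        r * (1 / √(gapCubic a b c x)) := by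
    ring
  have hsq := (intervalIntegrable_div_sqrt_gapCubic hab hbc
    (f := fun x ↦ x ^ 2) (by fun_prop)).const_mul p
  have hid := (intervalIntegrable_div_sqrt_gapCubic hab hbc
    (f := fun x ↦ x) (by fun_prop)).const_mul q
  have hone := (intervalIntegrable_div_sqrt_gapCubic hab hbc
    (f := fun _ ↦ 1) (by fun_prop)).const_mul r
  simp only [hsplit]
  rw [intervalIntegral.integral_add (hsq.add hid) hone, intervalIntegral.integral_add hsq hid]
  simp only [intervalIntegral.integral_const_mul]

lemma integral_sq_div_sqrt_gapCubic (hab : a < b) (hbc : b < c) :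
    ∫ x in a..b, x ^ 2 / √(gapCubic a b c x) =
      2 / 3 * (a + b + c) * (∫ x in a..b, x / √(gapCubic a b c x)) -
        (a * b + a * c + b * c) / 3 * ∫ x in a..b, 1 / √(gapCubic a b c x) := by
  have hexact := integral_deriv_gapCubic_div_sqrt_eq_zero hab hbc
  simp only [sub_eq_add_neg, ← neg_mul] at hexact
  rw [integral_quadratic_div_sqrt_gapCubic hab hbc] at hexact
  linarith

lemma integral_ratio_sqrt_gapCubic (hab : a < b) (hbc : b < c) :
    (∫ x in a..b, (x ^ 2 - (a + b + c) / 2 * x) / √(gapCubic a b c x)) /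
        (∫ x in a..b, 1 / √(gapCubic a b c x)) =
      (a + b + c) / 6 *
          (c - (c - a) * (ellipticE ((b - a) / (c - a)) / ellipticK ((b - a) / (c - a)))) -
        (a * b + a * c + b * c) / 3 := by
  have hac : a < c := hab.trans hbc
  have hK : ellipticK ((b - a) / (c - a)) ≠ 0 := (ellipticK_pos (sub_div_sub_lt_one hac hbc)).ne'
  have hsqrt : √(c - a) ≠ 0 := (sqrt_pos.2 (sub_pos.2 hac)).ne'
  have hnum := integral_quadratic_div_sqrt_gapCubic hab hbc 1 (-((a + b + c) / 2)) 0
  simp only [one_mul, neg_mul, ← sub_eq_add_neg, add_zero, zero_mul] at hnum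
  rw [hnum, integral_sq_div_sqrt_gapCubic hab hbc, integral_id_div_sqrt_gapCubic hab hbc,
    integral_one_div_sqrt_gapCubic hab hac]
  generalize ellipticK ((b - a) / (c - a)) = K at hK ⊢
  field_simp
  ring

end

/-- Normalization constant of the genus-1 condensate spectral flux density:
with `h² = (λ₁²+λ₂²+λ₃²)/2`, `m = (λ₂²-λ₁²)/(λ₃²-λ₁²)` and `μ(m) = E(m)/K(m)`,
`r² = (∫_{λ₁}^{λ₂} (y⁵-h²y³)/R̃ dy)/(∫_{λ₁}^{λ₂} y/R̃ dy)
    = (1/6)[λ₃²(λ₃²-λ₂²-λ₁²) - 2λ₁²λ₂² - (λ₁²+λ₂²+λ₃²)(λ₃²-λ₁²)μ(m)]`. -/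
theorem genus1_condensate_r_sq (l1 l2 l3 : ℝ)
    (h1 : 0 < l1) (h12 : l1 < l2) (h23 : l2 < l3) :
    (∫ y in l1..l2,
        (y ^ 5 - ((l1 ^ 2 + l2 ^ 2 + l3 ^ 2) / 2) * y ^ 3) /
          Real.sqrt ((y ^ 2 - l1 ^ 2) * (l2 ^ 2 - y ^ 2) * (l3 ^ 2 - y ^ 2))) /
      (∫ y in l1..l2,
        y / Real.sqrt ((y ^ 2 - l1 ^ 2) * (l2 ^ 2 - y ^ 2) * (l3 ^ 2 - y ^ 2))) =
      (1 / 6) *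
        (l3 ^ 2 * (l3 ^ 2 - l2 ^ 2 - l1 ^ 2) - 2 * l1 ^ 2 * l2 ^ 2 -
          (l1 ^ 2 + l2 ^ 2 + l3 ^ 2) * (l3 ^ 2 - l1 ^ 2) *
            (ellipticE ((l2 ^ 2 - l1 ^ 2) / (l3 ^ 2 - l1 ^ 2)) /
              ellipticK ((l2 ^ 2 - l1 ^ 2) / (l3 ^ 2 - l1 ^ 2)))) := by
  have hab : l1 ^ 2 < l2 ^ 2 := by gcongr
  have hbc : l2 ^ 2 < l3 ^ 2 := by gcongr; exact (h1.trans h12).le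
  have to_sq (g : ℝ → ℝ) := integral_comp_sq_mul_id h1.le (h1.trans h12).le g
  have hratio := integral_ratio_sqrt_gapCubic hab hbc
  rw [← mul_div_mul_left _ _ (one_half_pos (α := ℝ)).ne', ← to_sq, ← to_sq] at hratio
  have hnum (y : ℝ) : (y ^ 5 - ((l1 ^ 2 + l2 ^ 2 + l3 ^ 2) / 2) * y ^ 3) /
      Real.sqrt ((y ^ 2 - l1 ^ 2) * (l2 ^ 2 - y ^ 2) * (l3 ^ 2 - y ^ 2)) =
      ((y ^ 2) ^ 2 - (l1 ^ 2 + l2 ^ 2 + l3 ^ 2) / 2 * y ^ 2) /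
        Real.sqrt (gapCubic (l1 ^ 2) (l2 ^ 2) (l3 ^ 2) (y ^ 2)) * y := by
    rw [gapCubic]; ring
  have hden (y : ℝ) : y / Real.sqrt ((y ^ 2 - l1 ^ 2) * (l2 ^ 2 - y ^ 2) * (l3 ^ 2 - y ^ 2)) =
      1 / Real.sqrt (gapCubic (l1 ^ 2) (l2 ^ 2) (l3 ^ 2) (y ^ 2)) * y :=
    (one_div_mul_eq_div _ _).symm
  simp only [hnum, hden, hratio]
  ring
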